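/- arXiv:0802.2746 — 2 statements merged into one kernel-verified Lean document; each statement's English description precedes it below -/
import Mathlib

section
/- Let P, Q : ℝ^m → ℝ be differentiable, f = (P,Q), and let x lie on the sphere S^{m-1}_ε = {x : ‖x‖ = ε} with f(x) ≠ 0. Then x is a critical point of the restriction of φ = f/‖f‖ to S^{m-1}_ε \ K_ε (i.e., Dφ(x)·v = 0 for every v with ⟨v, x⟩ = 0) if and only if ω(x) = λ·x for some real number λ. -/
open scoped InnerProductSpace

lemma fderiv_phi_apply {m : ℕ} (P Q : EuclideanSpace ℝ (Fin m) → ℝ)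
    (hP : Differentiable ℝ P) (hQ : Differentiable ℝ Q)
    (x v : EuclideanSpace ℝ (Fin m)) (hN : 0 < P x ^ 2 + Q x ^ 2) :
    fderiv ℝ (fun y => (P y / Real.sqrt (P y ^ 2 + Q y ^ 2),
                            Q y / Real.sqrt (P y ^ 2 + Q y ^ 2))) x v =
      (-(Q x) * (P x * fderiv ℝ Q x v - Q x * fderiv ℝ P x v) / Real.sqrt (P x ^ 2 + Q x ^ 2) ^ 3,
       P x * (P x * fderiv ℝ Q x v - Q x * fderiv ℝ P x v) / Real.sqrt (P x ^ 2 + Q x ^ 2) ^ 3) := by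
  have hr : 0 < Real.sqrt (P x ^ 2 + Q x ^ 2) := Real.sqrt_pos.mpr hN
  have hr2 : Real.sqrt (P x ^ 2 + Q x ^ 2) ^ 2 = P x ^ 2 + Q x ^ 2 := Real.sq_sqrt hN.le
  have hline : HasDerivAt (fun t : ℝ => x + t • v) v 0 := by
    simpa using ((hasDerivAt_id (0 : ℝ)).smul_const v).const_add x
  have hx0 : x + (0 : ℝ) • v = x := by simp
  have hp : HasDerivAt (fun t : ℝ => P (x + t • v)) (fderiv ℝ P x v) 0 := by
    have h : HasFDerivAt P (fderiv ℝ P x) (x + (0 : ℝ) • v) := by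
      rw [hx0]; exact (hP x).hasFDerivAt
    exact h.comp_hasDerivAt 0 hline
  have hq : HasDerivAt (fun t : ℝ => Q (x + t • v)) (fderiv ℝ Q x v) 0 := by
    have h : HasFDerivAt Q (fderiv ℝ Q x) (x + (0 : ℝ) • v) := by
      rw [hx0]; exact (hQ x).hasFDerivAt
    exact h.comp_hasDerivAt 0 hline
  have hs := ((hp.fun_pow 2).fun_add (hq.fun_pow 2)).sqrt (by rw [hx0]; exact hN.ne')
  have h1 := (hp.fun_div hs (by rw [hx0]; exact hr.ne')).prodMk
    (hq.fun_div hs (by rw [hx0]; exact hr.ne'))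
  have hd : DifferentiableAt ℝ (fun y => (P y / Real.sqrt (P y ^ 2 + Q y ^ 2),
                            Q y / Real.sqrt (P y ^ 2 + Q y ^ 2))) x := by
    have hs' : DifferentiableAt ℝ (fun y => Real.sqrt (P y ^ 2 + Q y ^ 2)) x :=
      (((hP x).fun_pow 2).fun_add ((hQ x).fun_pow 2)).sqrt hN.ne'
    have e1 : DifferentiableAt ℝ (fun y => P y / Real.sqrt (P y ^ 2 + Q y ^ 2)) x :=
      by
      simp only [div_eq_mul_inv]
      exact (hP x).fun_mul (hs'.fun_inv hr.ne')
    have e2 : DifferentiableAt ℝ (fun y => Q y / Real.sqrt (P y ^ 2 + Q y ^ 2)) x :=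
      by
      simp only [div_eq_mul_inv]
      exact (hQ x).fun_mul (hs'.fun_inv hr.ne')
    exact e1.prodMk e2
  have hd' := hd.hasFDerivAt
  rw [← hx0] at hd'
  have h2 := hd'.comp_hasDerivAt 0 hline
  rw [hx0] at h2
  rw [h2.unique h1, hx0]
  set r := Real.sqrt (P x ^ 2 + Q x ^ 2)
  generalize fderiv ℝ P x v = a
  generalize fderiv ℝ Q x v = b
  have hr0 := hr.ne'
  ext
  · simp only []
    field_simp
    simp only [hr2]
    norm_num
    ring
  · simp only []
    field_simp
    simp only [hr2]
    norm_num
    ring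

/-- For `P, Q` differentiable, `‖x‖ = ε > 0` and `f x ≠ 0`, the point `x` is a
critical point of the restriction of `φ = f/‖f‖` to the sphere `S_ε` (i.e. `Dφ(x)·v = 0` for all
`v` tangent to the sphere at `x`) iff `ω x = λ • x` for some real `λ`. -/
theorem critical_point_iff_omega_parallel
    (m : ℕ) (P Q : EuclideanSpace ℝ (Fin m) → ℝ)
    (hP : Differentiable ℝ P) (hQ : Differentiable ℝ Q)
    (ε : ℝ) (hε : 0 < ε) (x : EuclideanSpace ℝ (Fin m)) (hx : ‖x‖ = ε)
    (hfx : ¬(P x = 0 ∧ Q x = 0)) :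
    (∀ v : EuclideanSpace ℝ (Fin m), ⟪v, x⟫_ℝ = 0 →
        fderiv ℝ (fun y => (P y / Real.sqrt (P y ^ 2 + Q y ^ 2),
                            Q y / Real.sqrt (P y ^ 2 + Q y ^ 2))) x v = 0) ↔
      ∃ lam : ℝ, P x • gradient Q x - Q x • gradient P x = lam • x := by
  have hN : 0 < P x ^ 2 + Q x ^ 2 := by
    by_contra h
    exact hfx ⟨by nlinarith [sq_nonneg (P x), sq_nonneg (Q x)],
      by nlinarith [sq_nonneg (P x), sq_nonneg (Q x)]⟩
  have hr : Real.sqrt (P x ^ 2 + Q x ^ 2) ^ 3 ≠ 0 := (pow_pos (Real.sqrt_pos.mpr hN) 3).ne'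
  have hw : ∀ v, ⟪P x • gradient Q x - Q x • gradient P x, v⟫_ℝ =
      P x * fderiv ℝ Q x v - Q x * fderiv ℝ P x v := by
    intro v
    simp [gradient, inner_sub_left, inner_smul_left]
  have key : ∀ v, fderiv ℝ (fun y => (P y / Real.sqrt (P y ^ 2 + Q y ^ 2),
        Q y / Real.sqrt (P y ^ 2 + Q y ^ 2))) x v = 0 ↔
      ⟪P x • gradient Q x - Q x • gradient P x, v⟫_ℝ = 0 := by
    intro v
    rw [fderiv_phi_apply P Q hP hQ x v hN, ← hw v, Prod.mk_eq_zero]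
    constructor
    · rintro ⟨h1, h2⟩
      by_contra h
      simp only [div_eq_zero_iff, hr, mul_eq_zero, neg_eq_zero, h, or_false] at h1 h2
      exact hfx ⟨h2, h1⟩
    · intro h
      simp [h]
  simp only [key]
  generalize P x • gradient Q x - Q x • gradient P x = w
  constructor
  · intro h
    have hxx : ⟪x, x⟫_ℝ ≠ 0 := by
      rw [real_inner_self_eq_norm_sq, hx]; positivity
    refine ⟨⟪w, x⟫_ℝ / ⟪x, x⟫_ℝ, ?_⟩
    have h0 : ⟪w - (⟪w, x⟫_ℝ / ⟪x, x⟫_ℝ) • x, x⟫_ℝ = 0 := by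
      rw [inner_sub_left, real_inner_smul_left, div_mul_cancel₀ _ hxx, sub_self]
    have h1 := h _ h0
    rw [← sub_eq_zero, ← inner_self_eq_zero (𝕜 := ℝ)]
    rw [inner_sub_left, h1, real_inner_smul_left, (real_inner_comm _ _).trans h0]
    simp
  · rintro ⟨l, rfl⟩ v hv
    rw [real_inner_smul_left, real_inner_comm, hv, mul_zero]
end

section
/- Milnor's example fails the strong Milnor condition: let P(x,y) = x and Q(x,y) = x² + y(x² + y²) on ℝ², and ω = P∇Q − Q∇P. Then for every ε > 0 there exists a point p = (x,y) ∈ ℝ² with 0 < ‖p‖ < ε, f(p) = (P(p),Q(p)) ≠ (0,0), and ω(p) = λ·p for some real λ; i.e., the projection f/‖f‖ restricted to the sphere of radius ‖p‖ has a critical point at p, so such critical points occur on spheres of arbitrarily small radius (the curve r = sin θ · cos² θ in polar coordinates consists of such points). -/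
/-- Milnor's example. For `P (x,y) = x` and
`Q (x,y) = x² + y(x² + y²)` on `ℝ²`, with `ω = P ∇Q − Q ∇P`, every ball around the origin
contains a point `p ≠ 0` with `f p ≠ 0` at which `ω p` is a scalar multiple of `p`; hence
critical points of `f/‖f‖` restricted to spheres occur on spheres of arbitrarily small
radius. -/
theorem milnor_example_critical_points
    (P Q : EuclideanSpace ℝ (Fin 2) → ℝ)
    (hPdef : ∀ x : EuclideanSpace ℝ (Fin 2), P x = x 0)
    (hQdef : ∀ x : EuclideanSpace ℝ (Fin 2),
      Q x = (x 0) ^ 2 + x 1 * ((x 0) ^ 2 + (x 1) ^ 2)) :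
    ∀ ε : ℝ, 0 < ε → ∃ p : EuclideanSpace ℝ (Fin 2),
      0 < ‖p‖ ∧ ‖p‖ < ε ∧ ¬(P p = 0 ∧ Q p = 0) ∧
      ∃ lam : ℝ, P p • gradient Q p - Q p • gradient P p = lam • p := by
  have hc : ∀ (i : Fin 2) (p : EuclideanSpace ℝ (Fin 2)),
      HasFDerivAt (fun x : EuclideanSpace ℝ (Fin 2) => x i)
        (EuclideanSpace.proj i : EuclideanSpace ℝ (Fin 2) →L[ℝ] ℝ) p := fun i p =>
    (EuclideanSpace.proj i : EuclideanSpace ℝ (Fin 2) →L[ℝ] ℝ).hasFDerivAt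
  have hP : ∀ p : EuclideanSpace ℝ (Fin 2), gradient P p = !₂[1, 0] := by
    intro p
    apply HasGradientAt.gradient
    rw [hasGradientAt_iff_hasFDerivAt, funext hPdef]
    refine (hc 0 p).congr_fderiv ?_
    ext v
    simp [PiLp.inner_apply, Fin.sum_univ_two]
  have hQ : ∀ p : EuclideanSpace ℝ (Fin 2), gradient Q p =
      !₂[2 * p 0 + 2 * p 0 * p 1, (p 0) ^ 2 + 3 * (p 1) ^ 2] := by
    intro p
    apply HasGradientAt.gradient
    rw [hasGradientAt_iff_hasFDerivAt, funext hQdef]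
    refine (((hc 0 p).pow 2).add
      ((hc 1 p).mul (((hc 0 p).pow 2).add ((hc 1 p).pow 2)))).congr_fderiv ?_
    ext v
    simp [PiLp.inner_apply, Fin.sum_univ_two]
    ring
  intro ε hε
  obtain ⟨t, ht0, htε⟩ := exists_between hε
  have hd : (1 + t ^ 2) ≠ 0 := by positivity
  have hx : 0 < t / (1 + t ^ 2) ^ 2 := by positivity
  refine ⟨!₂[t / (1 + t ^ 2) ^ 2, t ^ 2 / (1 + t ^ 2) ^ 2], ?_, ?_, ?_, ?_⟩
  · rw [norm_pos_iff]
    intro h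
    have := congrArg (fun v : EuclideanSpace ℝ (Fin 2) => v 0) h
    simp at this
    rcases this with h | h
    · exact ht0.ne' h
    · exact hd h
  · refine lt_of_le_of_lt ?_ htε
    rw [EuclideanSpace.norm_eq]
    apply Real.sqrt_le_iff.2 ⟨ht0.le, ?_⟩
    simp only [Fin.sum_univ_two, Real.norm_eq_abs, sq_abs]
    simp only [Matrix.cons_val_zero, Matrix.cons_val_one]
    have e : (t / (1 + t ^ 2) ^ 2) ^ 2 + (t ^ 2 / (1 + t ^ 2) ^ 2) ^ 2
        = t ^ 2 / (1 + t ^ 2) ^ 3 := by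
      field_simp
    rw [e]
    apply div_le_self (by positivity)
    exact one_le_pow₀ (by nlinarith)
  · rintro ⟨h, -⟩
    rw [hPdef] at h
    exact hx.ne' h
  · refine ⟨t / (1 + t ^ 2) ^ 2 + t / (1 + t ^ 2) ^ 2 * (t ^ 2 / (1 + t ^ 2) ^ 2)
      - (t ^ 2 / (1 + t ^ 2) ^ 2) ^ 2 * t, ?_⟩
    rw [hP, hQ, hPdef, hQdef]
    ext i
    fin_cases i
    · simp
      field_simp
      ring
    · simp
      field_simp
      ring
end
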